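/- Let α, σ ∈ (0,2) with α + σ > 3/2 and assume α ≠ 3/2 and σ ≠ 3/2. Then there exists a constant C such that for all x ∈ ℝ² with r = |x| ≥ 2, the integral over x₀ ∈ ℝ² of r₁^{-α} r₀^{-σ} e^{r - r₁ - r₀} dx₀ is bounded by C (r^{-(α+σ-3/2)} + r^{-α} + r^{-σ}), where r₀ = |x₀| and r₁ = |x - x₀|. -/

import Mathlib

open Real MeasureTheory

lemma polar_le (f : ℂ → ENNReal) : ∫⁻ z, f z ≤ ∫⁻ ρ in Set.Ioi (0:ℝ),
    ∫⁻ θ in Set.Ioo (-π) π, ENNReal.ofReal ρ * f (Complex.polarCoord.symm (ρ, θ)) := by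
  rw [← Complex.lintegral_comp_polarCoord_symm]
  have : (volume : Measure (ℝ × ℝ)).restrict polarCoord.target =
    ((volume : Measure ℝ).restrict (Set.Ioi 0)).prod
      ((volume : Measure ℝ).restrict (Set.Ioo (-π) π)) := by
    rw [Measure.prod_restrict]; rfl
  rw [this]
  exact lintegral_prod_le _

lemma symm_re (ρ θ : ℝ) : (Complex.polarCoord.symm (ρ, θ)).re = ρ * Real.cos θ := by
  rw [Complex.polarCoord_symm_apply]
  simp [← Complex.ofReal_cos, ← Complex.ofReal_sin]

lemma symm_norm {ρ : ℝ} (h : 0 < ρ) (θ : ℝ) : ‖Complex.polarCoord.symm (ρ, θ)‖ = ρ := by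
  rw [Complex.norm_polarCoord_symm]
  exact abs_of_pos h

noncomputable def angI (ρ : ℝ) : ENNReal :=
  ∫⁻ θ in Set.Ioo (-π) π, ENNReal.ofReal (Real.exp (-(ρ - ρ * Real.cos θ)))

lemma angI_le_one {ρ : ℝ} (h : 0 < ρ) : angI ρ ≤ ENNReal.ofReal (2 * π) := by
  unfold angI
  calc _ ≤ ∫⁻ θ in Set.Ioo (-π) π, (1 : ENNReal) := by
        apply lintegral_mono
        intro θ
        rw [← ENNReal.ofReal_one]
        apply ENNReal.ofReal_le_ofReal
        apply Real.exp_le_one_iff.2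
        nlinarith [Real.cos_le_one θ]
    _ = _ := by
      rw [setLIntegral_const, one_mul, Real.volume_Ioo]; congr 1; ring

lemma angI_le_gauss {ρ : ℝ} (h : 0 < ρ) :
    angI ρ ≤ ENNReal.ofReal (√(π ^ 3 / 2) * ρ ^ (-(1/2) : ℝ)) := by
  unfold angI
  have hb : 0 < 2 * ρ / π ^ 2 := by positivity
  calc _ ≤ ∫⁻ θ in Set.Ioo (-π) π, ENNReal.ofReal (Real.exp (-(2 * ρ / π ^ 2) * θ ^ 2)) := by
        apply setLIntegral_mono' measurableSet_Ioo
        intro θ hθ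
        apply ENNReal.ofReal_le_ofReal
        apply Real.exp_le_exp.2
        have := Real.cos_le_one_sub_mul_cos_sq (x := θ) (abs_le.2 ⟨hθ.1.le, hθ.2.le⟩)
        have := mul_le_mul_of_nonneg_left this h.le
        have e : ρ * (1 - 2 / π ^ 2 * θ ^ 2) = ρ - (2 * ρ / π ^ 2) * θ ^ 2 := by ring
        linarith
    _ ≤ ∫⁻ θ, ENNReal.ofReal (Real.exp (-(2 * ρ / π ^ 2) * θ ^ 2)) := setLIntegral_le_lintegral _ _
    _ = _ := by
      rw [← ofReal_integral_eq_lintegral_ofReal (integrable_exp_neg_mul_sq hb)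
        (Filter.Eventually.of_forall fun _ => (Real.exp_pos _).le), integral_gaussian]
      congr 1
      rw [Real.rpow_neg h.le, ← Real.sqrt_eq_rpow, ← Real.sqrt_inv, ← Real.sqrt_mul (by positivity)]
      congr 1
      field_simp

noncomputable def J1 (σ r : ℝ) : ENNReal :=
  ∫⁻ z : ℂ, if ‖z‖ ≤ r then ENNReal.ofReal (‖z‖ ^ (-σ)) * ENNReal.ofReal (Real.exp (-(‖z‖ - z.re)))
    else 0
noncomputable def J2 (σ : ℝ) : ENNReal :=
  ∫⁻ z : ℂ, ENNReal.ofReal (‖z‖ ^ (-σ) * Real.exp (-(1/2) * ‖z‖))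

lemma J1_le (σ r : ℝ) : J1 σ r ≤ ∫⁻ ρ in Set.Ioc (0:ℝ) r, ENNReal.ofReal (ρ ^ (1 - σ)) * angI ρ := by
  refine (polar_le _).trans ?_
  have : ∫⁻ ρ in Set.Ioc (0:ℝ) r, ENNReal.ofReal (ρ ^ (1 - σ)) * angI ρ =
    ∫⁻ ρ in Set.Ioi (0:ℝ), (Set.Iic r).indicator 
      (fun ρ => ENNReal.ofReal (ρ ^ (1 - σ)) * angI ρ) ρ := by
    rw [lintegral_indicator measurableSet_Iic, Measure.restrict_restrict measurableSet_Iic,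
      Set.inter_comm, Set.Ioi_inter_Iic]
  rw [this]
  apply setLIntegral_mono' measurableSet_Ioi
  intro ρ hρ
  have hρ : 0 < ρ := hρ
  simp only [symm_norm hρ, symm_re]
  by_cases h : ρ ≤ r
  · simp only [h, if_true]
    rw [Set.indicator_of_mem (by exact h), angI, ← lintegral_const_mul' _ _ ENNReal.ofReal_ne_top]
    apply le_of_eq
    congr 1
    ext θ
    rw [← mul_assoc, ← ENNReal.ofReal_mul hρ.le]
    congr 2
    rw [sub_eq_add_neg, Real.rpow_add hρ, Real.rpow_one]
  · simp [h]

lemma J2_lt {σ : ℝ} (hσ : σ < 2) : J2 σ < ⊤ := by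
  refine (polar_le _).trans_lt ?_
  have hi := (integrableOn_rpow_mul_exp_neg_mul_rpow (p := 1) (s := 1 - σ) (b := 1/2)
    (by linarith) one_pos (by norm_num)).const_mul (2 * π)
  refine lt_of_le_of_lt ?_ hi.lintegral_lt_top
  apply setLIntegral_mono' measurableSet_Ioi
  intro ρ hρ
  have hρ : 0 < ρ := hρ
  simp only [symm_norm hρ]
  rw [lintegral_const, ← ENNReal.ofReal_mul hρ.le]
  simp only [MeasurableSet.univ, Measure.restrict_apply, Set.univ_inter, Real.volume_Ioo]
  rw [← ENNReal.ofReal_mul (by positivity)]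
  apply le_of_eq
  congr 1
  rw [sub_eq_add_neg 1 σ, Real.rpow_add hρ, Real.rpow_one]
  ring

lemma J1_bound {σ : ℝ} (hσ : σ < 2) (hσ' : σ ≠ 3/2) :
    ∃ C : ℝ, 0 ≤ C ∧ ∀ r : ℝ, 2 ≤ r → J1 σ r ≤ ENNReal.ofReal (C * (1 + r ^ (3/2 - σ))) := by
  set K := √(π ^ 3 / 2) with hK
  have key : ∀ ρ : ℝ, 0 < ρ → ENNReal.ofReal (ρ ^ (1 - σ)) * angI ρ ≤
      ENNReal.ofReal (K * ρ ^ (1/2 - σ)) := by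
    intro ρ hρ
    refine (mul_le_mul_right (angI_le_gauss hρ) _).trans ?_
    rw [← ENNReal.ofReal_mul (by positivity)]
    apply ENNReal.ofReal_le_ofReal
    rw [show (1/2 - σ) = (1 - σ) + (-(1/2)) by ring, Real.rpow_add hρ]
    apply le_of_eq; ring
  rcases lt_or_gt_of_ne hσ' with h | h
  · have h0 : 0 < 3/2 - σ := by linarith
    refine ⟨K / (3/2 - σ), by positivity, fun r hr => (J1_le σ r).trans ?_⟩
    have hr0 : 0 < r := by linarith
    have hi : IntervalIntegrable (fun ρ : ℝ => K * ρ ^ (1/2 - σ)) volume 0 r :=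
      (intervalIntegral.intervalIntegrable_rpow' (by linarith)).const_mul _
    have hi' := (intervalIntegrable_iff_integrableOn_Ioc_of_le hr0.le).1 hi
    calc _ ≤ ∫⁻ ρ in Set.Ioc (0:ℝ) r, ENNReal.ofReal (K * ρ ^ (1/2 - σ)) :=
          setLIntegral_mono' measurableSet_Ioc fun ρ hρ => key ρ hρ.1
      _ = ENNReal.ofReal (K / (3/2 - σ) * r ^ (3/2 - σ)) := by
        rw [← ofReal_integral_eq_lintegral_ofReal hi', ← intervalIntegral.integral_of_le hr0.le,
          intervalIntegral.integral_const_mul, integral_rpow (Or.inl (by linarith))]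
        · rw [show 1/2 - σ + 1 = 3/2 - σ by ring, Real.zero_rpow h0.ne']
          congr 1; ring
        · filter_upwards [ae_restrict_mem measurableSet_Ioc] with ρ hρ
          have := hρ.1
          show 0 ≤ _
          positivity
      _ ≤ _ := by
        apply ENNReal.ofReal_le_ofReal
        apply mul_le_mul_of_nonneg_left _ (by positivity)
        linarith
  · set A := (∫⁻ ρ in Set.Ioc (0:ℝ) 1, ENNReal.ofReal (2 * π * ρ ^ (1 - σ))) +
      ∫⁻ ρ in Set.Ioi (1:ℝ), ENNReal.ofReal (K * ρ ^ (1/2 - σ)) with hA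
    have hAt : A < ⊤ := by
      have hi : IntervalIntegrable (fun ρ : ℝ => 2 * π * ρ ^ (1 - σ)) volume 0 1 :=
        (intervalIntegral.intervalIntegrable_rpow' (by linarith)).const_mul _
      have hi' := (intervalIntegrable_iff_integrableOn_Ioc_of_le zero_le_one).1 hi
      have hj := (integrableOn_Ioi_rpow_of_lt (a := 1/2 - σ) (by linarith) one_pos).const_mul K
      exact ENNReal.add_lt_top.2 ⟨hi'.lintegral_lt_top, hj.lintegral_lt_top⟩
    refine ⟨A.toReal, ENNReal.toReal_nonneg, fun r hr => (J1_le σ r).trans ?_⟩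
    have hr0 : 0 < r := by linarith
    calc _ ≤ ∫⁻ ρ in Set.Ioc (0:ℝ) 1 ∪ Set.Ioi 1, ENNReal.ofReal (ρ ^ (1 - σ)) * angI ρ := by
          apply lintegral_mono_set
          rw [Set.Ioc_union_Ioi_eq_Ioi zero_le_one]
          exact fun ρ hρ => hρ.1
      _ ≤ _ := lintegral_union_le _ _ _
      _ ≤ A := by
        apply add_le_add
        · apply setLIntegral_mono' measurableSet_Ioc
          intro ρ hρ
          refine (mul_le_mul_right (angI_le_one hρ.1) _).trans ?_
          rw [mul_comm, ← ENNReal.ofReal_mul (by positivity)]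
        · exact setLIntegral_mono' measurableSet_Ioi fun ρ hρ => key ρ (one_pos.trans hρ)
      _ = ENNReal.ofReal A.toReal := (ENNReal.ofReal_toReal hAt.ne).symm
      _ ≤ _ := by
        apply ENNReal.ofReal_le_ofReal
        apply le_mul_of_one_le_right ENNReal.toReal_nonneg
        have : 0 < r ^ (3/2 - σ) := by positivity
        linarith

/-- majorant in the half plane `‖z‖ ≤ ‖r - z‖` -/
noncomputable def GG (α σ r : ℝ) (z : ℂ) : ENNReal :=
  ENNReal.ofReal ((r/2) ^ (-α)) *
   ((if ‖z‖ ≤ r then ENNReal.ofReal (‖z‖ ^ (-σ)) * ENNReal.ofReal (Real.exp (-(‖z‖ - z.re)))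
    else 0) + ENNReal.ofReal (‖z‖ ^ (-σ) * Real.exp (-(1/2) * ‖z‖)))

lemma lintegral_GG {α σ : ℝ} (hσ : σ < 2) (hσ' : σ ≠ 3/2) :
    ∃ C : ℝ, 0 ≤ C ∧ ∀ r : ℝ, 2 ≤ r → ∫⁻ z, GG α σ r z ≤
      ENNReal.ofReal (C * (r ^ (-α) + r ^ (-(α + σ - 3/2)))) := by
  obtain ⟨C, hC, h⟩ := J1_bound hσ hσ'
  refine ⟨(2:ℝ) ^ α * (C + (J2 σ).toReal), by positivity, fun r hr => ?_⟩
  have hr0 : 0 < r := by linarith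
  unfold GG
  rw [lintegral_const_mul' _ _ ENNReal.ofReal_ne_top, lintegral_add_right _ (by fun_prop)]
  change _ * (J1 σ r + J2 σ) ≤ _
  have hJ : J2 σ = ENNReal.ofReal (J2 σ).toReal := (ENNReal.ofReal_toReal (J2_lt hσ).ne).symm
  have hp : 0 < r ^ (3/2 - σ) := by positivity
  calc _ ≤ ENNReal.ofReal ((r/2) ^ (-α)) * (ENNReal.ofReal (C * (1 + r ^ (3/2 - σ))) + 
          ENNReal.ofReal (J2 σ).toReal) := by
        gcongr
        · exact h r hr
        · exact hJ.le
    _ ≤ _ := by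
      rw [← ENNReal.ofReal_add (by positivity) (by positivity), ← ENNReal.ofReal_mul (by positivity)]
      apply ENNReal.ofReal_le_ofReal
      have e1 : (r/2) ^ (-α) = 2 ^ α * r ^ (-α) := by
        rw [Real.div_rpow hr0.le (by norm_num), Real.rpow_neg (by norm_num : (0:ℝ) ≤ 2)]
        field_simp
      have e2 : r ^ (-(α + σ - 3/2)) = r ^ (-α) * r ^ (3/2 - σ) := by
        rw [← Real.rpow_add hr0]; congr 1; ring
      rw [e1, e2]
      have : (0:ℝ) ≤ 2 ^ α * r ^ (-α) * ((J2 σ).toReal * r ^ (3/2 - σ)) := by positivity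
      nlinarith

lemma half_bound {α σ r : ℝ} (hα : 0 < α) (hr : 2 ≤ r) (z : ℂ) (hz : ‖z‖ ≤ ‖(r:ℂ) - z‖) :
    ENNReal.ofReal (‖(r:ℂ) - z‖ ^ (-α) * ‖z‖ ^ (-σ) * Real.exp (r - ‖(r:ℂ) - z‖ - ‖z‖)) ≤
      GG α σ r z := by
  have hr0 : 0 < r := by linarith
  have hn : ‖(r:ℂ)‖ = r := by simp [abs_of_pos hr0]
  have h1 : r / 2 ≤ ‖(r:ℂ) - z‖ := by
    have := norm_add_le ((r:ℂ) - z) z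
    rw [sub_add_cancel, hn] at this
    linarith
  have h2 : r - z.re ≤ ‖(r:ℂ) - z‖ := by
    simpa using Complex.re_le_norm ((r:ℂ) - z)
  have h3 : ‖(r:ℂ) - z‖ ^ (-α) ≤ (r/2) ^ (-α) :=
    Real.rpow_le_rpow_of_nonpos (by positivity) h1 (by linarith)
  have h4 : z.re ≤ r / 2 := by
    have : ‖z‖ ^ 2 ≤ ‖(r:ℂ) - z‖ ^ 2 := by gcongr
    rw [← Complex.normSq_eq_norm_sq, ← Complex.normSq_eq_norm_sq, Complex.normSq_apply,
      Complex.normSq_apply] at this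
    simp at this
    nlinarith
  have hzz : 0 ≤ ‖z‖ ^ (-σ) := by positivity
  unfold GG
  rw [mul_assoc, ENNReal.ofReal_mul (by positivity)]
  refine mul_le_mul' (ENNReal.ofReal_le_ofReal h3) ?_
  by_cases hzr : ‖z‖ ≤ r
  · rw [if_pos hzr]
    refine le_trans ?_ le_self_add
    rw [← ENNReal.ofReal_mul hzz]
    apply ENNReal.ofReal_le_ofReal
    gcongr
    linarith
  · rw [if_neg hzr, zero_add]
    apply ENNReal.ofReal_le_ofReal
    gcongr
    linarith

lemma full_bound {α σ r : ℝ} (hα : 0 < α) (hσ : 0 < σ) (hr : 2 ≤ r) (z : ℂ) :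
    ENNReal.ofReal (‖(r:ℂ) - z‖ ^ (-α) * ‖z‖ ^ (-σ) * Real.exp (r - ‖(r:ℂ) - z‖ - ‖z‖)) ≤
      GG α σ r z + GG σ α r (r - z) := by
  rcases le_total ‖z‖ ‖(r:ℂ) - z‖ with h | h
  · exact (half_bound hα hr z h).trans le_self_add
  · refine le_trans ?_ le_add_self
    have := half_bound (σ := α) hσ hr ((r:ℂ) - z) (by simpa using h)
    rw [sub_sub_cancel] at this
    rwa [mul_comm (‖z‖ ^ (-σ)), sub_right_comm] at this

lemma exists_iso (x : EuclideanSpace ℝ (Fin 2)) (hx : 2 ≤ ‖x‖) :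
    ∃ e : ℂ ≃ₗᵢ[ℝ] EuclideanSpace ℝ (Fin 2), e (‖x‖ : ℂ) = x := by
  set e0 := Complex.orthonormalBasisOneI.repr
  have hw : ‖e0.symm x‖ = ‖x‖ := e0.symm.norm_map x
  have h0 : e0.symm x ≠ 0 := by rw [← norm_pos_iff, hw]; linarith
  have hx0 : (‖x‖ : ℂ) ≠ 0 := by
    exact_mod_cast (by linarith : (0:ℝ) < ‖x‖).ne'
  let c : Circle := ⟨e0.symm x / ‖x‖, by
    rw [Submonoid.unitSphere]
    have : ‖x‖ ≠ 0 := by linarith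
    simp [hw, this]⟩
  refine ⟨(rotation c).trans e0, ?_⟩
  rw [LinearIsometryEquiv.trans_apply, rotation_apply]
  show e0 (e0.symm x / ‖x‖ * ‖x‖) = x
  rw [div_mul_cancel₀ _ hx0, LinearIsometryEquiv.apply_symm_apply]

theorem stmt4 (α σ : ℝ) (hα : α ∈ Set.Ioo (0 : ℝ) 2) (hσ : σ ∈ Set.Ioo (0 : ℝ) 2)
    (hsum : 3 / 2 < α + σ) (hα' : α ≠ 3 / 2) (hσ' : σ ≠ 3 / 2) :
    ∃ C : ℝ, ∀ x : EuclideanSpace ℝ (Fin 2), 2 ≤ ‖x‖ →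
      (∫ x₀ : EuclideanSpace ℝ (Fin 2),
        ‖x - x₀‖ ^ (-α) * ‖x₀‖ ^ (-σ) * Real.exp (‖x‖ - ‖x - x₀‖ - ‖x₀‖)) ≤
      C * (‖x‖ ^ (-(α + σ - 3 / 2)) + ‖x‖ ^ (-α) + ‖x‖ ^ (-σ)) := by
  obtain ⟨C1, hC1, h1⟩ := lintegral_GG (α := α) hσ.2 hσ'
  obtain ⟨C2, hC2, h2⟩ := lintegral_GG (α := σ) hα.2 hα'
  refine ⟨C1 + C2, fun x hx => ?_⟩
  obtain ⟨e, he⟩ := exists_iso x hx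
  have hx0 : 0 < ‖x‖ := by linarith
  rw [integral_eq_lintegral_of_nonneg_ae (Filter.Eventually.of_forall fun z => by positivity)
    (by fun_prop)]
  apply ENNReal.toReal_le_of_le_ofReal (by positivity)
  rw [← e.measurePreserving.lintegral_comp_emb e.toMeasurableEquiv.measurableEmbedding]
  have hc : ∀ z : ℂ, ‖x - e z‖ = ‖(‖x‖ : ℂ) - z‖ := fun z => by
    rw [← e.norm_map, map_sub, he]
  simp only [hc, e.norm_map]
  calc _ ≤ ∫⁻ z : ℂ, (GG α σ ‖x‖ z + GG σ α ‖x‖ (‖x‖ - z)) :=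
        lintegral_mono fun z => full_bound hα.1 hσ.1 hx z
    _ = (∫⁻ z, GG α σ ‖x‖ z) + ∫⁻ z, GG σ α ‖x‖ z := by
        rw [lintegral_add_left, lintegral_sub_left_eq_self (GG σ α ‖x‖)]
        unfold GG
        refine Measurable.const_mul (Measurable.add (Measurable.ite ?_ ?_ ?_) ?_) _
        · exact measurableSet_le (by fun_prop) (by fun_prop)
        · have : Measurable Complex.re := Complex.measurable_re
          fun_prop
        · fun_prop
        · fun_prop
    _ ≤ _ := add_le_add (h1 _ hx) (h2 _ hx)
    _ ≤ _ := by
      rw [← ENNReal.ofReal_add (by positivity) (by positivity)]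
      apply ENNReal.ofReal_le_ofReal
      rw [show σ + α - 3/2 = α + σ - 3/2 by ring]
      have p1 : 0 ≤ C1 * ‖x‖ ^ (-σ) := by positivity
      have p2 : 0 ≤ C2 * ‖x‖ ^ (-α) := by positivity
      nlinarith
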